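/- Let m ≥ 3 and let ε ∈ [0,1]. Every strategyproof SDS that is (1−ε)/m-ex post efficient is γ-randomly dictatorial for some γ ≥ ε. -/

import Mathlib

open Finset

noncomputable section

/-- A preference profile: each voter's strict linear order on the `m`
alternatives is encoded as a ranking permutation, where `R i x` is the rank of
alternative `x` for voter `i` (rank `0` = most preferred). Voter `i` strictly
prefers `x` to `y` iff `R i x < R i y`. -/
abbrev Profile (n m : ℕ) := Fin n → Equiv.Perm (Fin m)

/-- `F R x` is the probability that the social decision scheme `F` assigns to
alternative `x` at profile `R`; `IsSDS F` says every `F R` is a lottery. -/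
def IsSDS {n m : ℕ} (F : Profile n m → Fin m → ℝ) : Prop :=
  (∀ R x, 0 ≤ F R x) ∧ ∀ R, ∑ x, F R x = 1

/-- Stochastic-dominance preference of voter `i` (with preferences as in `R`):
lottery `p` is weakly preferred to lottery `q`. -/
def SDPref {n m : ℕ} (R : Profile n m) (i : Fin n) (p q : Fin m → ℝ) : Prop :=
  ∀ x : Fin m,
    ∑ y ∈ univ.filter (fun y => R i y < R i x), q y ≤
      ∑ y ∈ univ.filter (fun y => R i y < R i x), p y

/-- Strategyproofness: the truthful outcome is SD-preferred to any outcome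
obtainable by a unilateral deviation. -/
def Strategyproof {n m : ℕ} (F : Profile n m → Fin m → ℝ) : Prop :=
  ∀ (R R' : Profile n m) (i : Fin n),
    (∀ j, j ≠ i → R j = R' j) → SDPref R i (F R) (F R')

/-- Anonymity: permuting the voters does not change the outcome. -/
def Anonymous {n m : ℕ} (F : Profile n m → Fin m → ℝ) : Prop :=
  ∀ (π : Equiv.Perm (Fin n)) (R : Profile n m), F (fun i => R (π i)) = F R

/-- The profile obtained from `R` by relabeling the alternatives by `τ`
(in `relabel τ R`, alternative `τ x` gets the rank that `x` has in `R`). -/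
def relabel {n m : ℕ} (τ : Equiv.Perm (Fin m)) (R : Profile n m) : Profile n m :=
  fun i => τ.symm.trans (R i)

/-- Neutrality: relabeling the alternatives permutes the outcome accordingly. -/
def Neutral {n m : ℕ} (F : Profile n m → Fin m → ℝ) : Prop :=
  ∀ (τ : Equiv.Perm (Fin m)) (R : Profile n m) (x : Fin m),
    F (relabel τ R) (τ x) = F R x

/-- The supporting size `n_{xy}(R)`: the number of voters preferring `x` to `y`. -/
def suppSize {n m : ℕ} (R : Profile n m) (x y : Fin m) : ℕ :=
  (univ.filter (fun i => R i x < R i y)).card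

/-- `x` is the Condorcet winner of `R`. -/
def CondorcetWinner {n m : ℕ} (R : Profile n m) (x : Fin m) : Prop :=
  ∀ y, y ≠ x → suppSize R y x < suppSize R x y

/-- `α`-Condorcet-consistency. -/
def CondorcetConsistent {n m : ℕ} (F : Profile n m → Fin m → ℝ) (α : ℝ) : Prop :=
  ∀ R x, CondorcetWinner R x → α ≤ F R x

/-- `x` is Pareto-dominated in `R`. -/
def ParetoDominated {n m : ℕ} (R : Profile n m) (x : Fin m) : Prop :=
  ∃ y, ∀ i, R i y < R i x

/-- `β`-ex post efficiency. -/
def ExPostEff {n m : ℕ} (F : Profile n m → Fin m → ℝ) (β : ℝ) : Prop :=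
  ∀ R x, ParetoDominated R x → F R x ≤ β

/-- The probability that the dictatorial SDS of voter `i` assigns to `x`:
`1` if `x` is voter `i`'s most preferred alternative and `0` otherwise. -/
def dictProb {n m : ℕ} (R : Profile n m) (i : Fin n) (x : Fin m) : ℝ :=
  if ∀ y, R i x ≤ R i y then 1 else 0

/-- `d` is a random dictatorship. -/
def IsRandDict {n m : ℕ} (d : Profile n m → Fin m → ℝ) : Prop :=
  ∃ δ : Fin n → ℝ, (∀ i, 0 ≤ δ i) ∧ ∑ i, δ i = 1 ∧
    ∀ R x, d R x = ∑ i, δ i * dictProb R i x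

/-- `F` can be written as `γ d + (1 - γ) g` with `d` a random dictatorship and
`g` a strategyproof SDS. -/
def DecomposesAt {n m : ℕ} (F : Profile n m → Fin m → ℝ) (γ : ℝ) : Prop :=
  ∃ d g : Profile n m → Fin m → ℝ, IsRandDict d ∧ IsSDS g ∧ Strategyproof g ∧
    ∀ R x, F R x = γ * d R x + (1 - γ) * g R x

/-- `F` is `γ`-randomly dictatorial: `γ ∈ [0,1]` is the maximal value admitting
a decomposition `F = γ d + (1 - γ) g` as above. -/
def RandDictDegree {n m : ℕ} (F : Profile n m → Fin m → ℝ) (γ : ℝ) : Prop :=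
  0 ≤ γ ∧ γ ≤ 1 ∧ DecomposesAt F γ ∧
    ∀ γ', 0 ≤ γ' → γ' ≤ 1 → DecomposesAt F γ' → γ' ≤ γ

/-- The profile `R^{i:yx}` obtained from `R` by swapping `x` and `y` in voter
`i`'s preference relation (used when `x` is ranked directly above `y`). -/
def swapTop {n m : ℕ} (R : Profile n m) (i : Fin n) (x y : Fin m) : Profile n m :=
  Function.update R i ((R i).trans (Equiv.swap (R i x) (R i y)))

/-- The weight vector `b` defining the randomized Copeland rule:
`b k = 2/(m(m-1))` for `k > n/2`, `b k = 1/(m(m-1))` for `k = n/2`, `b k = 0`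
for `k < n/2`. -/
def copelandWeight (n m : ℕ) (k : ℕ) : ℝ :=
  if n < 2 * k then 2 / ((m : ℝ) * ((m : ℝ) - 1))
  else if 2 * k = n then 1 / ((m : ℝ) * ((m : ℝ) - 1))
  else 0

/-- The randomized Copeland rule `f_C(R, x) = ∑_{y ≠ x} b_{n_{xy}(R)}`. -/
def randCopeland (n m : ℕ) : Profile n m → Fin m → ℝ :=
  fun R x => ∑ y ∈ univ.filter (fun y => y ≠ x), copelandWeight n m (suppSize R x y)

/-- A point voting SDS, given by a scoring vector `a` (indexed by ranks
`0, …, m-1`, i.e. `a k` is the score of the `(k+1)`-st ranked alternative). -/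
structure PointVoting (n m : ℕ) where
  a : ℕ → ℝ
  mono : ∀ k l : ℕ, k ≤ l → l < m → a l ≤ a k
  nonneg : ∀ k : ℕ, k < m → 0 ≤ a k
  sum_eq : ∑ k ∈ Finset.range m, a k = 1 / (n : ℝ)

/-- The value of a point voting SDS. -/
def pvVal {n m : ℕ} (pv : PointVoting n m) : Profile n m → Fin m → ℝ :=
  fun R x => ∑ i, pv.a (R i x : ℕ)

/-- A supporting size SDS, given by a vector `b` indexed by supporting sizes
`0, …, n`. -/
structure SupportingSize (n m : ℕ) where
  b : ℕ → ℝ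
  mono : ∀ k l : ℕ, k ≤ l → l ≤ n → b k ≤ b l
  nonneg : ∀ k : ℕ, k ≤ n → 0 ≤ b k
  pair_eq : ∀ k : ℕ, k ≤ n → b k + b (n - k) = 2 / ((m : ℝ) * ((m : ℝ) - 1))

/-- The value of a supporting size SDS. -/
def ssVal {n m : ℕ} (S : SupportingSize n m) : Profile n m → Fin m → ℝ :=
  fun R x => ∑ y ∈ univ.filter (fun y => y ≠ x), S.b (suppSize R x y)

/-- A duple: a strategyproof SDS that puts positive probability on at most two
fixed alternatives. -/
def IsDuple {n m : ℕ} (g : Profile n m → Fin m → ℝ) : Prop :=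
  IsSDS g ∧ Strategyproof g ∧ ∃ x y : Fin m, ∀ R z, z ≠ x → z ≠ y → g R z = 0

/-- A unilateral: a strategyproof SDS that depends only on the preferences of a
single fixed voter. -/
def IsUnilateral {n m : ℕ} (g : Profile n m → Fin m → ℝ) : Prop :=
  IsSDS g ∧ Strategyproof g ∧
    ∃ i : Fin n, ∀ R R' : Profile n m, R i = R' i → g R = g R'

/-- `F` is a convex combination of SDSs satisfying the property `P`. -/
def MixOf {n m : ℕ} (P : (Profile n m → Fin m → ℝ) → Prop)
    (F : Profile n m → Fin m → ℝ) : Prop :=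
  ∃ (K : ℕ) (w : Fin K → ℝ) (g : Fin K → Profile n m → Fin m → ℝ),
    (∀ k, 0 ≤ w k) ∧ ∑ k, w k = 1 ∧ (∀ k, P (g k)) ∧
    ∀ R x, F R x = ∑ k, w k * g k R x

/-- The uniform random dictatorship. -/
def uniformRD (n m : ℕ) : Profile n m → Fin m → ℝ :=
  fun R x => (1 / (n : ℝ)) * ∑ i, dictProb R i x

/-- The uniform lottery. -/
def uniformLottery (n m : ℕ) : Profile n m → Fin m → ℝ :=
  fun _ _ => 1 / (m : ℝ)

/-!
Strategyproofness makes the probability of an alternative `y` a function of the sets of alternatives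
that the voters rank above `y`, and the effect on `y` of one voter moving alternatives past `y`
depends on the other voters only through where they place the alternatives that are moved.

Let `γ i` be the least gain in probability that an alternative receives when voter `i` moves it from
second place to the top. The dictatorship of `i` realizes every such gain as exactly `1`, so no
decomposition can give it more weight than `γ i`. Conversely `∑ i, γ i * d i` can be subtracted
from `F`, leaving a nonnegative multiple of a strategyproof SDS. Hence `F` is `∑ i, γ i`-randomly
dictatorial.

For the lower bound, add up, over all pairs `x ≠ y`, the probability of `y` when all voters rank `x`
first and `y` second; ex post efficiency bounds this sum by `(m - 1) * (1 - ε)`. Changing the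
contour sets of the voters to `{x}` one at a time splits the sum into contributions of single
voters. The contribution of `i` can be evaluated, for all pairs simultaneously, at one profile in
which the other voters rank the alternatives in a fixed order or its reverse. There, comparing a few
reports of voter `i` involving a pair that attains `γ i` shows that `i` contributes at least
`-(m - 1) * γ i`. Hence `(m - 1) * (1 - ∑ i, γ i) ≤ (m - 1) * (1 - ε)`.
-/

section Rankings

variable {m : ℕ} {x y : Fin m} {σ : Equiv.Perm (Fin m)} {S A B : Finset (Fin m)}

/-- The ranking that sorts the alternatives by increasing weight `κ`. -/
def rankBy (κ : Fin m → ℕ) : Equiv.Perm (Fin m) := (Tuple.sort κ).symm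

lemma rankBy_lt_iff (κ : Fin m → ℕ) (a b : Fin m) :
    rankBy κ a < rankBy κ b ↔ κ a < κ b ∨ κ a = κ b ∧ a < b := by
  have graph_lt : rankBy κ a < rankBy κ b ↔ Tuple.graphEquiv₁ κ a < Tuple.graphEquiv₁ κ b :=
    (Tuple.graphEquiv₂ κ).symm.lt_iff_lt
  rw [graph_lt]
  exact Prod.Lex.lt_iff

lemma rankBy_lt_of_lt {κ : Fin m → ℕ} {a b : Fin m} (h : κ a < κ b) : rankBy κ a < rankBy κ b :=
  (rankBy_lt_iff κ a b).2 (Or.inl h)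

/-- The strict upper contour set of `y`: the alternatives that the ranking `σ` places above `y`. -/
def upperContour (σ : Equiv.Perm (Fin m)) (y : Fin m) : Finset (Fin m) :=
  univ.filter fun z => σ z < σ y

@[simp]
lemma mem_upperContour : x ∈ upperContour σ y ↔ σ x < σ y := by
  simp [upperContour]

lemma upperContour_eq_empty_iff : upperContour σ x = ∅ ↔ ∀ y, σ x ≤ σ y := by
  simp [upperContour, filter_eq_empty_iff]

lemma upperContour_eq_empty_iff_eq_symm_zero [NeZero m] :
    upperContour σ x = ∅ ↔ σ.symm 0 = x := by
  rw [upperContour_eq_empty_iff, Equiv.symm_apply_eq]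
  refine ⟨fun h => ?_, fun h y => h ▸ Fin.zero_le _⟩
  simpa [eq_comm] using h (σ.symm 0)

/-- `S` is an initial segment of the ranking `σ`: everything in `S` is ranked above everything
outside. -/
def IsTopSet (σ : Equiv.Perm (Fin m)) (S : Finset (Fin m)) : Prop :=
  ∀ a ∈ S, ∀ b ∉ S, σ a < σ b

lemma isTopSet_upperContour (σ : Equiv.Perm (Fin m)) (y : Fin m) :
    IsTopSet σ (upperContour σ y) := by
  intro a ha b hb
  rw [mem_upperContour] at ha hb
  exact ha.trans_le (not_lt.1 hb)

lemma isTopSet_insert_upperContour (σ : Equiv.Perm (Fin m)) (y : Fin m) :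
    IsTopSet σ (insert y (upperContour σ y)) := by
  intro a ha b hb
  simp only [mem_insert, mem_upperContour, not_or, not_lt] at ha hb
  have y_lt_b : σ y < σ b := hb.2.lt_of_ne fun h => hb.1 (σ.injective h).symm
  rcases ha with rfl | ha
  · exact y_lt_b
  · exact ha.trans y_lt_b

lemma IsTopSet.exists_eq_upperContour (hS : IsTopSet σ S) (hne : S ≠ univ) :
    ∃ x, upperContour σ x = S := by
  obtain ⟨x, hx, x_min⟩ := exists_min_image Sᶜ σ (by simpa [nonempty_iff_ne_empty] using hne)
  refine ⟨x, ext fun y => ⟨fun hy => ?_, fun hy => ?_⟩⟩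
  · by_contra hyS
    exact (mem_upperContour.1 hy).not_ge (x_min y (mem_compl.2 hyS))
  · exact mem_upperContour.2 (hS y hy x (mem_compl.1 hx))

/-- The ranking with successive tiers `A`, `B \ A` and the remaining alternatives, into which `y`
is inserted at height `k`: these tiers have heights `0`, `2` and `4`, so `y` goes between the first
two for `k = 1`, and between the last two for `k = 3`. -/
def tierRank (y : Fin m) (A B : Finset (Fin m)) (k : ℕ) : Equiv.Perm (Fin m) :=
  rankBy fun z => if z = y then k else if z ∈ A then 0 else if z ∈ B then 2 else 4

lemma upperContour_tierRank_one : upperContour (tierRank y A B 1) y = A.erase y := by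
  ext z
  simp only [mem_upperContour, tierRank, rankBy_lt_iff, mem_erase]
  grind

lemma upperContour_tierRank_three : upperContour (tierRank y A B 3) y = (A ∪ B).erase y := by
  ext z
  simp only [mem_upperContour, tierRank, rankBy_lt_iff, mem_erase, mem_union]
  grind

lemma upperContour_tierRank_three_of_ne (hx : x ≠ y) (hAB : x ∈ B → x ∈ A) :
    upperContour (tierRank y A B 3) x = upperContour (tierRank y A B 1) x := by
  ext z
  simp only [mem_upperContour, tierRank, rankBy_lt_iff]
  grind

lemma upperContour_tierRank_singleton (hxy : x ≠ y) (hy : y ∉ S) :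
    upperContour (tierRank x S {y} 1) y = insert x S := by
  ext z
  simp only [mem_upperContour, tierRank, rankBy_lt_iff, mem_insert, mem_singleton]
  grind

lemma isTopSet_tierRank_erase {k : ℕ} (hk : 0 < k) : IsTopSet (tierRank y A B k) (A.erase y) := by
  intro a ha b hb
  apply rankBy_lt_of_lt
  grind

lemma isTopSet_tierRank_insert_erase : IsTopSet (tierRank y A B 1) (insert y (A.erase y)) := by
  intro a ha b hb
  apply rankBy_lt_of_lt
  grind

lemma isTopSet_tierRank_insert_union : IsTopSet (tierRank y A B 1) (insert y (A ∪ B)) := by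
  intro a ha b hb
  apply rankBy_lt_of_lt
  grind

end Rankings

section Localization

variable {n m : ℕ} {F : Profile n m → Fin m → ℝ} {R R' : Profile n m} {i : Fin n}

lemma Strategyproof.sum_le_sum_of_isTopSet (hsp : Strategyproof F) (hF : IsSDS F)
    (hR : ∀ j ≠ i, R j = R' j) {S : Finset (Fin m)} (hS : IsTopSet (R i) S) :
    ∑ y ∈ S, F R' y ≤ ∑ y ∈ S, F R y := by
  by_cases hne : S = univ
  · rw [hne, hF.2, hF.2]
  · obtain ⟨x, rfl⟩ := hS.exists_eq_upperContour hne
    exact hsp R R' i hR x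

lemma Strategyproof.sum_eq_sum_of_isTopSet (hsp : Strategyproof F) (hF : IsSDS F)
    (hR : ∀ j ≠ i, R j = R' j) {S : Finset (Fin m)} (hS : IsTopSet (R i) S)
    (hS' : IsTopSet (R' i) S) : ∑ y ∈ S, F R y = ∑ y ∈ S, F R' y :=
  le_antisymm (hsp.sum_le_sum_of_isTopSet hF (fun j hj => (hR j hj).symm) hS')
    (hsp.sum_le_sum_of_isTopSet hF hR hS)

lemma Strategyproof.apply_eq_of_upperContour_eq (hsp : Strategyproof F) (hF : IsSDS F)
    (hR : ∀ j ≠ i, R j = R' j) {y : Fin m} (hy : upperContour (R i) y = upperContour (R' i) y) :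
    F R y = F R' y := by
  have above := hsp.sum_eq_sum_of_isTopSet hF hR (isTopSet_upperContour (R i) y)
    (hy ▸ isTopSet_upperContour (R' i) y)
  have above_or_self := hsp.sum_eq_sum_of_isTopSet hF hR (isTopSet_insert_upperContour (R i) y)
    (hy ▸ isTopSet_insert_upperContour (R' i) y)
  have y_notMem : y ∉ upperContour (R i) y := by simp
  rw [sum_insert y_notMem, sum_insert y_notMem, above] at above_or_self
  exact add_right_cancel above_or_self

/-- The upper contour sets of `y` for all voters. -/
def contours (R : Profile n m) (y : Fin m) : Fin n → Finset (Fin m) :=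
  fun j => upperContour (R j) y

lemma contours_update (R : Profile n m) (i : Fin n) (σ : Equiv.Perm (Fin m)) (y : Fin m) :
    contours (Function.update R i σ) y = Function.update (contours R y) i (upperContour σ y) :=
  Function.comp_update (fun σ => upperContour σ y) R i σ

lemma Strategyproof.apply_eq_of_contours_eq (hsp : Strategyproof F) (hF : IsSDS F) {y : Fin m}
    (hy : contours R y = contours R' y) : F R y = F R' y := by
  suffices replace_voters : ∀ s : Finset (Fin n), F R y = F (s.piecewise R' R) y by
    simpa using replace_voters univ
  intro s
  induction s using Finset.induction_on with
  | empty => simp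
  | insert i s hi ih =>
    rw [ih, piecewise_insert]
    apply hsp.apply_eq_of_upperContour_eq hF (i := i)
    · intro j hj
      rw [Function.update_of_ne hj]
    · simpa [hi, contours] using congrFun hy i

end Localization

section ContourProb

variable {n m : ℕ} {F : Profile n m → Fin m → ℝ} {x y z : Fin m} {i : Fin n}

/-- A profile in which the upper contour set of `y` for each voter `j` is `(U j).erase y`. -/
def contourProfile (y : Fin m) (U : Fin n → Finset (Fin m)) : Profile n m :=
  fun j => tierRank y (U j) (U j) 1

/-- The probability of `y` as a function of its upper contour sets `U`, on which alone it depends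
when `F` is strategyproof. Whether `y` belongs to `U j` is irrelevant. -/
def contourProb (F : Profile n m → Fin m → ℝ) (y : Fin m) (U : Fin n → Finset (Fin m)) : ℝ :=
  F (contourProfile y U) y

lemma upperContour_contourProfile (y : Fin m) (U : Fin n → Finset (Fin m)) (j : Fin n) :
    upperContour (contourProfile y U j) y = (U j).erase y :=
  upperContour_tierRank_one

lemma Strategyproof.apply_eq_contourProb (hsp : Strategyproof F) (hF : IsSDS F) {R : Profile n m}
    {U : Fin n → Finset (Fin m)} (hU : ∀ j, upperContour (R j) y = (U j).erase y) :
    F R y = contourProb F y U :=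
  hsp.apply_eq_of_contours_eq hF
    (funext fun j => (hU j).trans (upperContour_contourProfile y U j).symm)

lemma Strategyproof.apply_eq_contourProb_contours (hsp : Strategyproof F) (hF : IsSDS F)
    (R : Profile n m) (y : Fin m) : F R y = contourProb F y (contours R y) :=
  hsp.apply_eq_contourProb hF fun j => (erase_eq_of_notMem (by simp)).symm

lemma Strategyproof.contourProb_update_antitone (hsp : Strategyproof F) (hF : IsSDS F) (y : Fin m)
    (W : Fin n → Finset (Fin m)) (i : Fin n) :
    Antitone fun P => contourProb F y (Function.update W i P) := by
  intro A B hAB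
  let R : ℕ → Profile n m := fun k => Function.update (contourProfile y W) i (tierRank y A B k)
  have apply_self {k : ℕ} {P : Finset (Fin m)}
      (hP : upperContour (tierRank y A B k) y = P.erase y) :
      F (R k) y = contourProb F y (Function.update W i P) := by
    apply hsp.apply_eq_contourProb hF
    intro j
    rcases eq_or_ne j i with rfl | hj
    · simpa [R] using hP
    · simpa [R, hj] using upperContour_contourProfile y W j
  have same_voters : ∀ j ≠ i, R 1 j = R 3 j := fun j hj => by simp [R, hj]
  have above := hsp.sum_eq_sum_of_isTopSet hF same_voters (S := A.erase y)
    (by simpa [R] using isTopSet_tierRank_erase one_pos)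
    (by simpa [R] using isTopSet_tierRank_erase three_pos)
  have above_or_self := hsp.sum_le_sum_of_isTopSet hF same_voters (S := insert y (A.erase y))
    (by simpa only [R, Function.update_self] using isTopSet_tierRank_insert_erase)
  rw [sum_insert (notMem_erase y A), sum_insert (notMem_erase y A), above,
    apply_self upperContour_tierRank_one,
    apply_self (P := B) (by rw [upperContour_tierRank_three, union_eq_right.2 hAB])]
    at above_or_self
  exact le_of_add_le_add_right above_or_self

/-- The profile in which the voters in `S` rank `y` directly below the tier `B j \ A j`, and the
other voters rank `y` directly above it. -/
def hybridProfile (y : Fin m) (A B : Fin n → Finset (Fin m)) (S : Finset (Fin n)) : Profile n m :=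
  S.piecewise (fun j => tierRank y (A j) (B j) 3) (fun j => tierRank y (A j) (B j) 1)

lemma Strategyproof.apply_hybridProfile_self (hsp : Strategyproof F) (hF : IsSDS F)
    {A B : Fin n → Finset (Fin m)} (hAB : A ≤ B) (S : Finset (Fin n)) :
    F (hybridProfile y A B S) y = contourProb F y (S.piecewise B A) := by
  apply hsp.apply_eq_contourProb hF
  intro j
  by_cases hj : j ∈ S
  · simp [hybridProfile, hj, upperContour_tierRank_three, union_eq_right.2 (hAB j)]
  · simp [hybridProfile, hj, upperContour_tierRank_one]

lemma Strategyproof.apply_hybridProfile_congr (hsp : Strategyproof F) (hF : IsSDS F)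
    {A B : Fin n → Finset (Fin m)} {S T : Finset (Fin n)} (hx : x ≠ y)
    (hST : ∀ j, x ∈ B j \ A j → (j ∈ S ↔ j ∈ T)) :
    F (hybridProfile y A B S) x = F (hybridProfile y A B T) x := by
  apply hsp.apply_eq_of_contours_eq hF
  funext j
  by_cases hxj : x ∈ B j \ A j
  · simp [contours, hybridProfile, piecewise, hST j hxj]
  · have three_eq_one : upperContour (tierRank y (A j) (B j) 3) x =
        upperContour (tierRank y (A j) (B j) 1) x :=
      upperContour_tierRank_three_of_ne hx (by simpa using hxj)
    by_cases hS : j ∈ S <;> by_cases hT : j ∈ T <;>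
      simp [contours, hybridProfile, hS, hT, three_eq_one]

/-- Every alternative other than `y` is moved past `y` by voters on at most one side of `T`, so its
four probabilities cancel; as lotteries sum to one, so do those of `y`. -/
lemma Strategyproof.contourProb_modular (hsp : Strategyproof F) (hF : IsSDS F)
    {A B : Fin n → Finset (Fin m)} (hAB : A ≤ B) {T : Finset (Fin n)}
    (hT : ∀ i ∈ T, ∀ j ∉ T, Disjoint (B i \ A i) (B j \ A j)) :
    contourProb F y B + contourProb F y A =
      contourProb F y (T.piecewise B A) + contourProb F y (T.piecewise A B) := by
  let p : Finset (Fin n) → Fin m → ℝ := fun S => F (hybridProfile y A B S)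
  have cancel : ∀ x ∈ ({y}ᶜ : Finset (Fin m)), p univ x + p ∅ x = p T x + p Tᶜ x := by
    intro x hx
    have hxy : x ≠ y := by simpa using hx
    by_cases moved : ∃ i ∈ T, x ∈ B i \ A i
    · obtain ⟨i, hi, hxi⟩ := moved
      have mem_T : ∀ j, x ∈ B j \ A j → j ∈ T := fun j hxj =>
        by_contra fun hj => disjoint_left.1 (hT i hi j hj) hxi hxj
      have univ_T : p univ x = p T x := hsp.apply_hybridProfile_congr hF hxy (by simpa using mem_T)
      have empty_compl : p ∅ x = p Tᶜ x :=
        hsp.apply_hybridProfile_congr hF hxy (by simpa using mem_T)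
      rw [univ_T, empty_compl]
    · have notMem_T : ∀ j, x ∈ B j \ A j → j ∉ T := fun j hxj hj => moved ⟨j, hj, hxj⟩
      have univ_compl : p univ x = p Tᶜ x :=
        hsp.apply_hybridProfile_congr hF hxy (by simpa using notMem_T)
      have empty_T : p ∅ x = p T x := hsp.apply_hybridProfile_congr hF hxy (by simpa using notMem_T)
      rw [univ_compl, empty_T, add_comm]
  have cancel_sum := sum_congr rfl cancel
  simp only [sum_add_distrib] at cancel_sum
  have total (S : Finset (Fin n)) : p S y + ∑ x ∈ {y}ᶜ, p S x = 1 := by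
    rw [← Fintype.sum_eq_add_sum_compl, hF.2]
  have apply_self (S : Finset (Fin n)) : p S y = contourProb F y (S.piecewise B A) :=
    hsp.apply_hybridProfile_self hF hAB S
  rw [← piecewise_compl T B A, ← apply_self T, ← apply_self Tᶜ]
  have at_univ : p univ y = contourProb F y B := by simpa using apply_self univ
  have at_empty : p ∅ y = contourProb F y A := by simpa using apply_self ∅
  linarith [total univ, total ∅, total T, total Tᶜ]

lemma Strategyproof.contourProb_update_sub_of_le (hsp : Strategyproof F) (hF : IsSDS F)
    {W₀ W : Fin n → Finset (Fin m)} {P₀ P : Finset (Fin m)} (hW : W₀ ≤ W) (hP : P₀ ⊆ P)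
    (hdisj : ∀ j ≠ i, Disjoint (P \ P₀) (W j \ W₀ j)) :
    contourProb F y (Function.update W i P) - contourProb F y (Function.update W i P₀) =
      contourProb F y (Function.update W₀ i P) - contourProb F y (Function.update W₀ i P₀) := by
  have modular := hsp.contourProb_modular hF (y := y) (T := {i})
    (A := Function.update W₀ i P₀) (B := Function.update W i P)
    (update_le_update_iff.2 ⟨hP, fun j _ => hW j⟩) (by
      intro k hk j hj
      rw [mem_singleton] at hk hj
      simpa [hk, hj] using hdisj j hj)
  simp only [piecewise_singleton, Function.update_self, Function.update_idem] at modular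
  linarith

lemma Strategyproof.contourProb_update_sub_congr (hsp : Strategyproof F) (hF : IsSDS F)
    {W W' : Fin n → Finset (Fin m)} {P P' : Finset (Fin m)}
    (hW : ∀ j ≠ i, ∀ z, ¬(z ∈ P ↔ z ∈ P') → (z ∈ W j ↔ z ∈ W' j)) :
    contourProb F y (Function.update W i P) - contourProb F y (Function.update W i P') =
      contourProb F y (Function.update W' i P) - contourProb F y (Function.update W' i P') := by
  have to_meet {V : Fin n → Finset (Fin m)} {Q : Finset (Fin m)} (hV : V = W ∨ V = W')
      (hQ : Q = P ∨ Q = P') :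
      contourProb F y (Function.update V i Q) - contourProb F y (Function.update V i (P ∩ P')) =
        contourProb F y (Function.update (W ⊓ W') i Q) -
          contourProb F y (Function.update (W ⊓ W') i (P ∩ P')) := by
    apply hsp.contourProb_update_sub_of_le hF
    · rcases hV with rfl | rfl
      exacts [inf_le_left, inf_le_right]
    · rcases hQ with rfl | rfl
      exacts [inter_subset_left, inter_subset_right]
    · intro j hj
      rw [disjoint_left]
      have := hW j hj
      grind [Pi.inf_apply]
  linarith [to_meet (.inl rfl) (.inl rfl), to_meet (.inl rfl) (.inr rfl),
    to_meet (.inr rfl) (.inl rfl), to_meet (.inr rfl) (.inr rfl)]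

lemma Strategyproof.contourProb_mixed_difference_congr (hsp : Strategyproof F) (hF : IsSDS F)
    {P Q : Finset (Fin m)} (hPQ : Disjoint P Q) (W W' : Fin n → Finset (Fin m)) :
    contourProb F y (Function.update W i (P ∪ Q)) - contourProb F y (Function.update W i P) -
        (contourProb F y (Function.update W i Q) - contourProb F y (Function.update W i ∅)) =
      contourProb F y (Function.update W' i (P ∪ Q)) - contourProb F y (Function.update W' i P) -
        (contourProb F y (Function.update W' i Q) - contourProb F y (Function.update W' i ∅)) := by
  rw [disjoint_left] at hPQ
  let V : Fin n → Finset (Fin m) := fun j => (W j \ P) ∪ (W' j ∩ P)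
  have V_off_P : ∀ j, ∀ z ∉ P, (z ∈ W j ↔ z ∈ V j) := by grind
  have V_on_P : ∀ j, ∀ z ∈ P, (z ∈ V j ↔ z ∈ W' j) := by grind
  have add_Q : ∀ z, ¬(z ∈ P ∪ Q ↔ z ∈ P) → z ∉ P := by grind
  have Q_only : ∀ z, ¬(z ∈ Q ↔ z ∈ (∅ : Finset (Fin m))) → z ∉ P := by grind
  have add_P : ∀ z, ¬(z ∈ P ∪ Q ↔ z ∈ Q) → z ∈ P := by grind
  have P_only : ∀ z, ¬(z ∈ P ↔ z ∈ (∅ : Finset (Fin m))) → z ∈ P := by grind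
  linarith [
    hsp.contourProb_update_sub_congr hF (y := y) (i := i) fun j _ z h => V_off_P j z (add_Q z h),
    hsp.contourProb_update_sub_congr hF (y := y) (i := i) fun j _ z h => V_off_P j z (Q_only z h),
    hsp.contourProb_update_sub_congr hF (y := y) (i := i) fun j _ z h => V_on_P j z (add_P z h),
    hsp.contourProb_update_sub_congr hF (y := y) (i := i) fun j _ z h => V_on_P j z (P_only z h)]

end ContourProb

section Sums

variable {ι M : Type*} [Fintype ι] [DecidableEq ι] [AddCommMonoid M] {x y : ι}

lemma sum_compl_singleton_eq_add (hxy : x ≠ y) (f : ι → M) :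
    ∑ z ∈ {x}ᶜ, f z = f y + ∑ z ∈ {x, y}ᶜ, f z := by
  have erase_eq : ({x}ᶜ : Finset ι).erase y = {x, y}ᶜ := by grind [mem_compl]
  rw [← add_sum_erase {x}ᶜ f (a := y) (by simp [hxy.symm]), erase_eq]

lemma sum_sum_compl_singleton_eq_add (hxy : x ≠ y) (f : ι → ι → M) :
    ∑ a, ∑ b ∈ {a}ᶜ, f a b =
      f x y + f y x + ∑ z ∈ {x, y}ᶜ, (f x z + f y z + ∑ b ∈ {z}ᶜ, f z b) := by
  rw [← sum_add_sum_compl {x, y}, sum_pair hxy, sum_compl_singleton_eq_add hxy,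
    sum_compl_singleton_eq_add hxy.symm, pair_comm y x, sum_add_distrib, sum_add_distrib]
  abel

end Sums

section ResponseProb

variable {n m : ℕ} {F : Profile n m → Fin m → ℝ} {R R' : Profile n m} {i : Fin n} {x y z : Fin m}

/-- The probability of `y` when voter `i` reports a ranking with upper contour set `S` of `y`, while
the other voters report as in `R`. -/
def responseProb (F : Profile n m → Fin m → ℝ) (R : Profile n m) (i : Fin n) (y : Fin m)
    (S : Finset (Fin m)) : ℝ :=
  contourProb F y (Function.update (contours R y) i S)

lemma Strategyproof.apply_eq_responseProb (hsp : Strategyproof F) (hF : IsSDS F)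
    (hR : ∀ j ≠ i, R j = R' j) (y : Fin m) :
    F R' y = responseProb F R i y (upperContour (R' i) y) := by
  have contours_eq :
      contours R' y = Function.update (contours R y) i (upperContour (R' i) y) := by
    rw [Function.eq_update_iff]
    exact ⟨rfl, fun j hj => congrArg (upperContour · y) (hR j hj).symm⟩
  rw [hsp.apply_eq_contourProb_contours hF, contours_eq, responseProb]

lemma Strategyproof.apply_update_eq_responseProb (hsp : Strategyproof F) (hF : IsSDS F)
    (R : Profile n m) (i : Fin n) (σ : Equiv.Perm (Fin m)) (y : Fin m) :
    F (Function.update R i σ) y = responseProb F R i y (upperContour σ y) := by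
  rw [hsp.apply_eq_contourProb_contours hF, contours_update, responseProb]

lemma Strategyproof.responseProb_antitone (hsp : Strategyproof F) (hF : IsSDS F) (R : Profile n m)
    (i : Fin n) (y : Fin m) : Antitone (responseProb F R i y) :=
  hsp.contourProb_update_antitone hF y (contours R y) i

lemma Strategyproof.responseProb_add_responseProb_insert_comm (hsp : Strategyproof F)
    (hF : IsSDS F) (R : Profile n m) (i : Fin n) {S : Finset (Fin m)} (hxy : x ≠ y) (hx : x ∉ S)
    (hy : y ∉ S) :
    responseProb F R i x S + responseProb F R i y (insert x S) =
      responseProb F R i y S + responseProb F R i x (insert y S) := by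
  let R' : Fin m → Fin m → Profile n m := fun a b => Function.update R i (tierRank a S {b} 1)
  have apply_first {a b : Fin m} (ha : a ∉ S) : F (R' a b) a = responseProb F R i a S := by
    rw [hsp.apply_update_eq_responseProb hF, upperContour_tierRank_one, erase_eq_of_notMem ha]
  have apply_second {a b : Fin m} (hab : a ≠ b) (hb : b ∉ S) :
      F (R' a b) b = responseProb F R i b (insert a S) := by
    rw [hsp.apply_update_eq_responseProb hF, upperContour_tierRank_singleton hab hb]
  have same_voters : ∀ j ≠ i, R' x y j = R' y x j := fun j hj => by simp [R', hj]
  have topSet {a b : Fin m} (ha : a ∉ S) : IsTopSet (R' a b i) S := by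
    simpa [R', erase_eq_of_notMem ha] using
      isTopSet_tierRank_erase (y := a) (A := S) (B := {b}) one_pos
  have topSet_insert {a b : Fin m} : IsTopSet (R' a b i) (insert a (insert b S)) := by
    rw [insert_eq b S, union_comm]
    simpa only [R', Function.update_self] using isTopSet_tierRank_insert_union
  have above := hsp.sum_eq_sum_of_isTopSet hF same_voters (topSet hx) (topSet hy)
  have above_or_pair := hsp.sum_eq_sum_of_isTopSet hF same_voters topSet_insert
    (Finset.insert_comm y x S ▸ topSet_insert)
  have x_notMem : x ∉ insert y S := by simp [hxy, hx]
  rw [sum_insert x_notMem, sum_insert hy, sum_insert x_notMem, sum_insert hy, above,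
    apply_first hx, apply_second hxy hy, apply_first hy, apply_second hxy.symm hx] at above_or_pair
  linarith

lemma Strategyproof.one_le_sum_responseProb (hsp : Strategyproof F) (hF : IsSDS F)
    (R : Profile n m) (i : Fin n) {σ : Equiv.Perm (Fin m)} {C : Fin m → Finset (Fin m)}
    (hC : ∀ y, C y ⊆ upperContour σ y) : 1 ≤ ∑ y, responseProb F R i y (C y) := by
  rw [← hF.2 (Function.update R i σ)]
  refine sum_le_sum fun y _ => ?_
  rw [hsp.apply_update_eq_responseProb hF]
  exact hsp.responseProb_antitone hF R i y (hC y)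

lemma Strategyproof.one_le_responseProb_add_responseProb_add_sum (hsp : Strategyproof F)
    (hF : IsSDS F) (R : Profile n m) (i : Fin n) (hxy : x ≠ y) {C : Fin m → Finset (Fin m)}
    (hC : ∀ w, C w ⊆ {x, y}) :
    1 ≤ responseProb F R i x ∅ + responseProb F R i y {x} +
      ∑ w ∈ {x, y}ᶜ, responseProb F R i w (C w) := by
  let D : Fin m → Finset (Fin m) := fun w => if w = x then ∅ else if w = y then {x} else C w
  have D_subset : ∀ w, D w ⊆ upperContour (tierRank x ∅ {y} 1) w := by
    intro w z hz
    rw [mem_upperContour]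
    apply rankBy_lt_of_lt
    have := @hC w z
    grind
  have cover := hsp.one_le_sum_responseProb hF R i D_subset
  have D_off_pair : ∀ w ∈ ({x, y}ᶜ : Finset (Fin m)), D w = C w := by grind [mem_compl]
  rw [← sum_add_sum_compl {x, y}, sum_pair hxy,
    sum_congr rfl fun w hw => by rw [D_off_pair w hw]] at cover
  simpa [D, hxy.symm] using cover

lemma Strategyproof.le_sum_responseProb_singleton (hsp : Strategyproof F) (hF : IsSDS F)
    (R : Profile n m) (i : Fin n) (hxy : x ≠ y) (hzx : z ≠ x) (hzy : z ≠ y) :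
    1 + 2 * (responseProb F R i y {z} - responseProb F R i y {z, x}) -
        (responseProb F R i y ∅ - responseProb F R i y {x}) + responseProb F R i z {x, y} ≤
      responseProb F R i z {x} + responseProb F R i z {y} +
        ∑ w ∈ {z}ᶜ, responseProb F R i w {z} := by
  let u := responseProb F R i
  have top_zx : 1 ≤ u z ∅ + u x {z} +
      ∑ w ∈ {z, x}ᶜ, u w (if w = y then {z, x} else {z}) :=
    hsp.one_le_responseProb_add_responseProb_add_sum hF R i hzx fun w => by split_ifs <;> simp
  have y_mem : y ∈ ({z, x}ᶜ : Finset (Fin m)) := by simp [hxy.symm, hzy.symm]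
  have split_row : ∑ w ∈ {z}ᶜ, u w {z} =
      u x {z} + (u y {z} + ∑ w ∈ ({z, x}ᶜ : Finset (Fin m)).erase y, u w {z}) := by
    rw [add_sum_erase _ (fun w => u w {z}) y_mem, sum_compl_singleton_eq_add hzx]
  rw [← add_sum_erase _ _ y_mem, if_pos rfl,
    sum_congr rfl fun w hw => by rw [if_neg (ne_of_mem_erase hw)]] at top_zx
  have swap_yz : u y ∅ + u z {y} = u z ∅ + u y {z} :=
    hsp.responseProb_add_responseProb_insert_comm hF R i hzy.symm (by simp) (by simp)
  have swap_yz_below_x : u y {x} + u z {x, y} = u z {x} + u y {z, x} := by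
    rw [pair_comm x y]
    exact hsp.responseProb_add_responseProb_insert_comm hF R i hzy.symm
      (by simp [hxy.symm]) (by simp [hzx])
  linarith

end ResponseProb

section DictWeight

variable {n m : ℕ} {F : Profile n m → Fin m → ℝ} {i : Fin n} {x y z : Fin m}

/-- The gain in probability of `y` when voter `i` moves `y` from second place, below `x`, to the
top, the contour sets of `y` for the other voters being given by `W`. -/
def topGain (F : Profile n m → Fin m → ℝ) (i : Fin n) (x y : Fin m) (W : Fin n → Finset (Fin m)) :
    ℝ :=
  contourProb F y (Function.update W i ∅) - contourProb F y (Function.update W i {x})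

/-- The largest multiple of the dictatorship of voter `i` contained in `F`: the least gain that `i`
can cause by moving an alternative from second place to the top. For `m ≤ 1` the infimum is over
the empty set and has the junk value `0`. -/
def dictWeight (F : Profile n m → Fin m → ℝ) (i : Fin n) : ℝ :=
  ⨅ p : {p : Fin m × Fin m // p.1 ≠ p.2} × (Fin n → Finset (Fin m)),
    topGain F i p.1.1.1 p.1.1.2 p.2

lemma dictWeight_le_topGain (F : Profile n m → Fin m → ℝ) (i : Fin n) (hxy : x ≠ y)
    (W : Fin n → Finset (Fin m)) : dictWeight F i ≤ topGain F i x y W :=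
  ciInf_le (f := fun p : {p : Fin m × Fin m // p.1 ≠ p.2} × (Fin n → Finset (Fin m)) =>
    topGain F i p.1.1.1 p.1.1.2 p.2) (Set.finite_range _).bddBelow (⟨(x, y), hxy⟩, W)

lemma exists_topGain_eq_dictWeight (hm : 2 ≤ m) (F : Profile n m → Fin m → ℝ) (i : Fin n) :
    ∃ x y W, x ≠ y ∧ topGain F i x y W = dictWeight F i := by
  have : Nontrivial (Fin m) := Fin.nontrivial_iff_two_le.2 hm
  obtain ⟨x, y, hxy⟩ := exists_pair_ne (Fin m)
  have : Nonempty {p : Fin m × Fin m // p.1 ≠ p.2} := ⟨(x, y), hxy⟩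
  obtain ⟨⟨⟨⟨x, y⟩, hxy⟩, W⟩, attained⟩ := exists_eq_ciInf_of_finite
    (f := fun p : {p : Fin m × Fin m // p.1 ≠ p.2} × (Fin n → Finset (Fin m)) =>
      topGain F i p.1.1.1 p.1.1.2 p.2)
  exact ⟨x, y, W, hxy, attained⟩

lemma Strategyproof.topGain_nonneg (hsp : Strategyproof F) (hF : IsSDS F) (i : Fin n) (x y : Fin m)
    (W : Fin n → Finset (Fin m)) : 0 ≤ topGain F i x y W :=
  sub_nonneg.2 (hsp.contourProb_update_antitone hF y W i (empty_subset {x}))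

lemma Strategyproof.dictWeight_nonneg (hsp : Strategyproof F) (hF : IsSDS F) (i : Fin n) :
    0 ≤ dictWeight F i :=
  Real.iInf_nonneg fun _ => hsp.topGain_nonneg hF i _ _ _

/-- The two sides differ by a mixed second difference, which does not depend on the other voters
and is therefore bounded by monotonicity at `W'`. -/
lemma Strategyproof.topGain_sub_topGain_le (hsp : Strategyproof F) (hF : IsSDS F) (i : Fin n)
    (y : Fin m) (hzx : z ≠ x) (W W' : Fin n → Finset (Fin m)) :
    topGain F i x y W - topGain F i x y W' ≤
      contourProb F y (Function.update W i {z}) - contourProb F y (Function.update W i {z, x}) := by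
  have mixed := hsp.contourProb_mixed_difference_congr hF (y := y) (i := i)
    (disjoint_singleton.2 hzx) W W'
  rw [← insert_eq] at mixed
  have mono : contourProb F y (Function.update W' i {z, x}) ≤
      contourProb F y (Function.update W' i {z}) :=
    hsp.contourProb_update_antitone hF y W' i (by simp)
  unfold topGain
  linarith

lemma Strategyproof.mul_one_sub_dictWeight_le (hsp : Strategyproof F) (hF : IsSDS F) (hm : 3 ≤ m)
    (R : Profile n m) (i : Fin n) :
    ((m : ℝ) - 1) * (1 - dictWeight F i) ≤ ∑ x, ∑ y ∈ {x}ᶜ, responseProb F R i y {x} := by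
  obtain ⟨x, y, W, hxy, hW⟩ := exists_topGain_eq_dictWeight (by omega) F i
  let u := responseProb F R i
  let γ := dictWeight F i
  let e := u y ∅ - u y {x}
  have γ_le_e : γ ≤ e := dictWeight_le_topGain F i hxy (contours R y)
  have row {z : Fin m} (hz : z ∈ ({x, y}ᶜ : Finset (Fin m))) :
      (1 + e - 2 * γ) + u z {x, y} ≤ u z {x} + u z {y} + ∑ w ∈ {z}ᶜ, u w {z} := by
    obtain ⟨hzx, hzy⟩ : z ≠ x ∧ z ≠ y := by simpa using hz
    have gain_below_z : e - topGain F i x y W ≤ u y {z} - u y {z, x} :=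
      hsp.topGain_sub_topGain_le hF i y hzx (contours R y) W
    rw [hW] at gain_below_z
    linarith [hsp.le_sum_responseProb_singleton hF R i hxy hzx hzy]
  have rows := sum_le_sum fun z hz => row hz
  have card_others : (({x, y}ᶜ : Finset (Fin m)).card : ℝ) = m - 2 := by
    rw [card_compl, card_pair hxy, Fintype.card_fin, Nat.cast_sub (by omega), Nat.cast_two]
  rw [sum_add_distrib, sum_const, nsmul_eq_mul, card_others] at rows
  have top_xy : 1 ≤ u x ∅ + u y {x} + ∑ w ∈ {x, y}ᶜ, u w {x, y} :=
    hsp.one_le_responseProb_add_responseProb_add_sum hF R i hxy fun _ => Subset.rfl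
  have swap_xy : u x ∅ + u y {x} = u y ∅ + u x {y} :=
    hsp.responseProb_add_responseProb_insert_comm hF R i hxy (by simp) (by simp)
  have weaken : ((m : ℝ) - 3) * γ ≤ (m - 3) * e :=
    mul_le_mul_of_nonneg_left γ_le_e (by simpa using hm)
  rw [sum_sum_compl_singleton_eq_add hxy fun x y => responseProb F R i y {x}]
  linarith

end DictWeight

section Reversal

variable {n m : ℕ} {F : Profile n m → Fin m → ℝ} {y : Fin m}

/-- The profile in which the first `k` voters rank the alternatives in their natural order and the
other voters rank them in the reverse order. -/
def reversalProfile (n m k : ℕ) : Profile n m :=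
  fun j => if (j : ℕ) < k then Equiv.refl (Fin m) else Fin.revPerm

lemma contours_reversalProfile (k : ℕ) (y : Fin m) (j : Fin n) :
    contours (reversalProfile n m k) y j = if (j : ℕ) < k then Iio y else Ioi y := by
  ext z
  by_cases hj : (j : ℕ) < k <;> simp [contours, reversalProfile, hj]

/-- An alternative that lies in only one of `U` and `Ioi y` lies in `U` if and only if it lies in
`Iio y`, so voter `i` has the same effect whether the voters before `i` have contour set `U` or
`Iio y`. -/
lemma Strategyproof.contourProb_update_hybrid_sub (hsp : Strategyproof F) (hF : IsSDS F)
    {U : Finset (Fin m)} (hy : y ∉ U) (i : Fin n) :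
    contourProb F y (fun j => if (j : ℕ) < i + 1 then U else Ioi y) -
        contourProb F y (fun j => if (j : ℕ) < i then U else Ioi y) =
      responseProb F (reversalProfile n m i) i y U - F (reversalProfile n m i) y := by
  let H : Fin n → Finset (Fin m) := fun j => if (j : ℕ) < i then U else Ioi y
  have H_succ : (fun j : Fin n => if (j : ℕ) < i + 1 then U else Ioi y) =
      Function.update H i U := by
    funext j
    grind [Function.update_apply, Fin.ext_iff]
  have H_self : H = Function.update H i (Ioi y) := by simp [H]
  have contours_self : contours (reversalProfile n m i) y =
      Function.update (contours (reversalProfile n m i) y) i (Ioi y) := by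
    simp [contours_reversalProfile]
  rw [H_succ, hsp.apply_eq_contourProb_contours hF, contours_self, responseProb]
  change _ - contourProb F y H = _
  nth_rw 2 [H_self]
  apply hsp.contourProb_update_sub_congr hF
  intro j _ z hz
  rw [contours_reversalProfile]
  grind

lemma Strategyproof.contourProb_const_eq (hsp : Strategyproof F) (hF : IsSDS F)
    {U : Finset (Fin m)} (hy : y ∉ U) :
    contourProb F y (fun _ => U) = F (reversalProfile n m 0) y +
      ∑ i : Fin n,
        (responseProb F (reversalProfile n m i) i y U - F (reversalProfile n m i) y) := by
  let H : ℕ → Fin n → Finset (Fin m) := fun k j => if (j : ℕ) < k then U else Ioi y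
  have at_start : F (reversalProfile n m 0) y = contourProb F y (H 0) := by
    rw [hsp.apply_eq_contourProb_contours hF]
    congr 1
    funext j
    simp [contours_reversalProfile, H]
  have at_end : (fun _ => U) = H n := by
    funext j
    simp [H]
  rw [at_start, at_end, sum_congr rfl fun i _ => (hsp.contourProb_update_hybrid_sub hF hy i).symm,
    Fin.sum_univ_eq_sum_range (fun k => contourProb F y (H (k + 1)) - contourProb F y (H k)),
    sum_range_sub (fun k => contourProb F y (H k)), add_sub_cancel]

lemma IsSDS.sum_sum_compl_singleton (hF : IsSDS F) (R : Profile n m) :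
    ∑ x, ∑ y ∈ {x}ᶜ, F R y = m - 1 := by
  have row (x : Fin m) : ∑ y ∈ {x}ᶜ, F R y = 1 - F R x := by
    rw [← hF.2 R, Fintype.sum_eq_add_sum_compl x, add_sub_cancel_left]
  simp only [row, sum_sub_distrib, hF.2, sum_const, card_univ, Fintype.card_fin, nsmul_eq_mul,
    mul_one]

lemma Strategyproof.mul_one_sub_sum_dictWeight_le (hsp : Strategyproof F) (hF : IsSDS F)
    (hm : 3 ≤ m) :
    ((m : ℝ) - 1) * (1 - ∑ i, dictWeight F i) ≤
      ∑ x, ∑ y ∈ {x}ᶜ, contourProb F y (fun _ => {x}) := by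
  let Q : ℕ → Profile n m := reversalProfile n m
  calc ((m : ℝ) - 1) * (1 - ∑ i, dictWeight F i)
      = (m - 1) + ∑ i, ((m - 1) * (1 - dictWeight F i) - (m - 1)) := by
        simp only [← mul_sub_one, ← mul_sum, sum_sub_distrib]
        ring
    _ ≤ (m - 1) + ∑ i : Fin n, ((∑ x, ∑ y ∈ {x}ᶜ, responseProb F (Q i) i y {x}) - (m - 1)) := by
        gcongr with i
        exact hsp.mul_one_sub_dictWeight_le hF hm (Q i) i
    _ = ∑ x, ∑ y ∈ {x}ᶜ, (F (Q 0) y +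
          ∑ i : Fin n, (responseProb F (Q i) i y {x} - F (Q i) y)) := by
        simp only [sum_add_distrib, hF.sum_sum_compl_singleton, sum_comm (t := univ (α := Fin n)),
          sum_sub_distrib]
    _ = ∑ x, ∑ y ∈ {x}ᶜ, contourProb F y (fun _ => {x}) := by
        refine sum_congr rfl fun x _ => sum_congr rfl fun y hy => ?_
        exact (hsp.contourProb_const_eq hF (by simpa using hy)).symm

lemma ExPostEff.contourProb_singleton_le {β : ℝ} (heff : ExPostEff F β) {x : Fin m} (hxy : x ≠ y) :
    contourProb F y (fun _ => {x}) ≤ β := by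
  refine heff _ y ⟨x, fun i => mem_upperContour.1 ?_⟩
  simpa [upperContour_contourProfile] using hxy

lemma ExPostEff.sum_contourProb_singleton_le {β : ℝ} (heff : ExPostEff F β) :
    ∑ x, ∑ y ∈ {x}ᶜ, contourProb F y (fun _ => {x}) ≤ m * ((m - 1) * β) := by
  have row (x : Fin m) : ∑ y ∈ {x}ᶜ, contourProb F y (fun _ => {x}) ≤ (m - 1) * β := by
    refine (sum_le_card_nsmul _ _ β fun y hy =>
      heff.contourProb_singleton_le (by simpa [eq_comm] using hy)).trans_eq ?_
    rw [card_compl, card_singleton, Fintype.card_fin, nsmul_eq_mul, Nat.cast_pred x.pos]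
  simpa using sum_le_card_nsmul univ _ _ fun x _ => row x

lemma Strategyproof.le_sum_dictWeight_of_exPostEff (hsp : Strategyproof F) (hF : IsSDS F)
    (hm : 3 ≤ m) {ε : ℝ} (heff : ExPostEff F ((1 - ε) / m)) : ε ≤ ∑ i, dictWeight F i := by
  have m_ne_zero : (m : ℝ) ≠ 0 := by exact_mod_cast (by omega : m ≠ 0)
  have one_lt_m : (1 : ℝ) < m := by exact_mod_cast (by omega : 1 < m)
  have bound : ((m : ℝ) - 1) * (1 - ∑ i, dictWeight F i) ≤ (m - 1) * (1 - ε) :=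
    calc ((m : ℝ) - 1) * (1 - ∑ i, dictWeight F i)
        ≤ m * ((m - 1) * ((1 - ε) / m)) :=
          (hsp.mul_one_sub_sum_dictWeight_le hF hm).trans heff.sum_contourProb_singleton_le
      _ = (m - 1) * (1 - ε) := by rw [mul_left_comm, mul_div_cancel₀ _ m_ne_zero]
  linarith [le_of_mul_le_mul_left bound (sub_pos.2 one_lt_m)]

end Reversal

section Dictatorships

variable {n m : ℕ} {F : Profile n m → Fin m → ℝ} {R R' : Profile n m} {w : Fin n → ℝ} {i : Fin n}
  {x y : Fin m}

/-- The mixture of the dictatorships with weights `w`, which need not sum to one. -/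
def dictMix (w : Fin n → ℝ) (R : Profile n m) (x : Fin m) : ℝ :=
  ∑ i, w i * dictProb R i x

lemma dictProb_eq_ite_upperContour (R : Profile n m) (i : Fin n) (x : Fin m) :
    dictProb R i x = if upperContour (R i) x = ∅ then 1 else 0 := by
  simp only [dictProb, upperContour_eq_empty_iff]

lemma sum_dictMix [NeZero m] (w : Fin n → ℝ) (R : Profile n m) (U : Finset (Fin m)) :
    ∑ x ∈ U, dictMix w R x = ∑ i, w i * if (R i).symm 0 ∈ U then 1 else 0 := by
  simp only [dictMix, sum_comm (s := U), ← mul_sum, dictProb_eq_ite_upperContour,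
    upperContour_eq_empty_iff_eq_symm_zero, sum_ite_eq]

lemma sum_univ_dictMix [NeZero m] (w : Fin n → ℝ) (R : Profile n m) :
    ∑ x, dictMix w R x = ∑ i, w i := by
  simp [sum_dictMix]

lemma topGain_dictMix (w : Fin n → ℝ) (i : Fin n) (hxy : x ≠ y) (W : Fin n → Finset (Fin m)) :
    topGain (dictMix w) i x y W = w i := by
  have contourProb_dictMix (U : Fin n → Finset (Fin m)) :
      contourProb (dictMix w) y U = ∑ j, w j * if (U j).erase y = ∅ then 1 else 0 := by
    simp only [contourProb, dictMix, dictProb_eq_ite_upperContour, upperContour_contourProfile]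
  rw [topGain, contourProb_dictMix, contourProb_dictMix, ← sum_sub_distrib,
    Fintype.sum_eq_single i fun j hj => by simp [hj]]
  simp [erase_eq_of_notMem (notMem_singleton.2 hxy.symm)]

lemma IsSDS.sum_dictWeight_le_contourProb (hF : IsSDS F) (hm : 2 ≤ m) (s : Finset (Fin n))
    {U : Fin n → Finset (Fin m)} (hU : ∀ i ∈ s, U i = ∅) :
    ∑ i ∈ s, dictWeight F i ≤ contourProb F x U := by
  induction s using Finset.induction_on generalizing U with
  | empty => simpa only [sum_empty, contourProb] using hF.1 _ x
  | insert i s hi ih =>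
    have : Nontrivial (Fin m) := Fin.nontrivial_iff_two_le.2 hm
    obtain ⟨y, hyx⟩ := exists_ne x
    have gain := dictWeight_le_topGain F i hyx U
    rw [topGain, Function.update_eq_self_iff.2 (hU i (mem_insert_self i s)).symm] at gain
    have rest : ∑ j ∈ s, dictWeight F j ≤ contourProb F x (Function.update U i {y}) := by
      refine ih fun j hj => ?_
      rw [Function.update_of_ne (ne_of_mem_of_not_mem hj hi), hU j (mem_insert_of_mem hj)]
    rw [sum_insert hi]
    linarith

lemma Strategyproof.dictMix_dictWeight_le (hsp : Strategyproof F) (hF : IsSDS F) (hm : 2 ≤ m)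
    (R : Profile n m) (x : Fin m) : dictMix (dictWeight F) R x ≤ F R x := by
  have mix_eq : dictMix (dictWeight F) R x = ∑ i with upperContour (R i) x = ∅, dictWeight F i := by
    rw [sum_filter]
    simp [dictMix, dictProb_eq_ite_upperContour]
  rw [mix_eq, hsp.apply_eq_contourProb_contours hF]
  exact hF.sum_dictWeight_le_contourProb hm _ fun i hi => (mem_filter.1 hi).2

/-- The intermediate report `y ≻ z ≻ U \ {y} ≻ …` keeps `insert z U` on top, but ranks `z` second
instead of first. -/
lemma Strategyproof.sum_add_dictWeight_le (hsp : Strategyproof F) (hF : IsSDS F)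
    (hR : ∀ j ≠ i, R j = R' j) {U : Finset (Fin m)} (hU : IsTopSet (R i) U) {z : Fin m}
    (hy : y ∈ U) (hz : z ∉ U) (z_top : upperContour (R' i) z = ∅) :
    ∑ x ∈ U, F R' x + dictWeight F i ≤ ∑ x ∈ U, F R x := by
  have hyz : y ≠ z := ne_of_mem_of_not_mem hy hz
  let R₂ := Function.update R i (tierRank z {y} U 1)
  have R₂_of_ne : ∀ j ≠ i, R₂ j = R j := fun j hj => Function.update_of_ne hj _ R
  have topSet : IsTopSet (R₂ i) (insert z U) := by
    rw [← union_eq_right.2 (singleton_subset_iff.2 hy)]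
    simpa only [R₂, Function.update_self] using isTopSet_tierRank_insert_union
  have insert_le := hsp.sum_le_sum_of_isTopSet hF
    (fun j hj => (R₂_of_ne j hj).trans (hR j hj)) topSet
  rw [sum_insert hz, sum_insert hz] at insert_le
  have U_le := hsp.sum_le_sum_of_isTopSet hF (fun j hj => (R₂_of_ne j hj).symm) hU
  have z_first : F R' z = responseProb F R i z ∅ := z_top ▸ hsp.apply_eq_responseProb hF hR z
  have z_second : F R₂ z = responseProb F R i z {y} := by
    rw [hsp.apply_update_eq_responseProb hF, upperContour_tierRank_one,
      erase_eq_of_notMem (notMem_singleton.2 hyz.symm)]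
  have gain : dictWeight F i ≤ responseProb F R i z ∅ - responseProb F R i z {y} :=
    dictWeight_le_topGain F i hyz (contours R z)
  linarith

lemma Strategyproof.sub_dictMix_dictWeight (hsp : Strategyproof F) (hF : IsSDS F) :
    Strategyproof fun R x => F R x - dictMix (dictWeight F) R x := by
  intro R R' i hR x
  have : NeZero m := NeZero.of_pos x.pos
  change ∑ y ∈ upperContour (R i) x, _ ≤ ∑ y ∈ upperContour (R i) x, _
  set U := upperContour (R i) x
  have hU : IsTopSet (R i) U := isTopSet_upperContour (R i) x
  have others : ∑ j ∈ {i}ᶜ, dictWeight F j * (if (R' j).symm 0 ∈ U then (1 : ℝ) else 0) =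
      ∑ j ∈ {i}ᶜ, dictWeight F j * if (R j).symm 0 ∈ U then (1 : ℝ) else 0 :=
    sum_congr rfl fun j hj => by rw [hR j (by simpa using hj)]
  simp only [sum_sub_distrib, sum_dictMix, Fintype.sum_eq_add_sum_compl i, others]
  have truthful := hsp.sum_le_sum_of_isTopSet hF hR hU
  have weight_nonneg := hsp.dictWeight_nonneg hF i
  by_cases top_mem : (R i).symm 0 ∈ U
  · by_cases top_mem' : (R' i).symm 0 ∈ U
    · simpa [top_mem, top_mem'] using truthful
    · have drop := hsp.sum_add_dictWeight_le hF hR hU top_mem top_mem'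
        (upperContour_eq_empty_iff_eq_symm_zero.2 rfl)
      simp only [top_mem, top_mem', if_true, if_false]
      linarith
  · simp only [top_mem, if_false]
    split_ifs <;> linarith

lemma exists_isRandDict_mul_eq_dictMix (hn : 1 ≤ n) (hw : ∀ i, 0 ≤ w i) :
    ∃ d : Profile n m → Fin m → ℝ, IsRandDict d ∧ ∀ R x, (∑ i, w i) * d R x = dictMix w R x := by
  suffices normalized : ∃ δ : Fin n → ℝ,
      (∀ i, 0 ≤ δ i) ∧ ∑ i, δ i = 1 ∧ ∀ i, (∑ j, w j) * δ i = w i by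
    obtain ⟨δ, δ_nonneg, δ_sum, mul_δ⟩ := normalized
    refine ⟨dictMix δ, ⟨δ, δ_nonneg, δ_sum, fun _ _ => rfl⟩, fun R x => ?_⟩
    simp only [dictMix, mul_sum, ← mul_assoc, mul_δ]
  rcases eq_or_ne (∑ i, w i) 0 with sum_zero | sum_ne_zero
  · have w_zero : ∀ i, w i = 0 := by
      simpa using (sum_eq_zero_iff_of_nonneg fun i _ => hw i).1 sum_zero
    have single_nonneg : 0 ≤ (Pi.single ⟨0, hn⟩ 1 : Fin n → ℝ) := Pi.single_nonneg.2 zero_le_one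
    exact ⟨Pi.single ⟨0, hn⟩ 1, single_nonneg, by simp, by simp [w_zero]⟩
  · refine ⟨fun i => w i / ∑ j, w j, fun i => ?_, ?_, fun i => mul_div_cancel₀ _ sum_ne_zero⟩
    · exact div_nonneg (hw i) (sum_nonneg fun j _ => hw j)
    · rw [← sum_div, div_self sum_ne_zero]

lemma Strategyproof.exists_isSDS_mul_eq {G : Profile n m → Fin m → ℝ} (hGsp : Strategyproof G)
    {c : ℝ} (hG : ∀ R x, 0 ≤ G R x) (hGc : ∀ R, ∑ x, G R x = c) (hF : IsSDS F)
    (hsp : Strategyproof F) :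
    ∃ g : Profile n m → Fin m → ℝ, IsSDS g ∧ Strategyproof g ∧ ∀ R x, c * g R x = G R x := by
  rcases eq_or_ne c 0 with rfl | c_ne_zero
  · have G_zero : ∀ R x, G R x = 0 := fun R => by
      simpa using (sum_eq_zero_iff_of_nonneg fun x _ => hG R x).1 (hGc R)
    exact ⟨F, hF, hsp, by simp [G_zero]⟩
  · have c_nonneg : 0 ≤ c := hGc 1 ▸ sum_nonneg fun x _ => hG 1 x
    refine ⟨fun R x => G R x / c, ⟨fun R x => div_nonneg (hG R x) c_nonneg, fun R => ?_⟩,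
      fun R R' i hR x => ?_, fun R x => mul_div_cancel₀ _ c_ne_zero⟩
    · rw [← sum_div, hGc, div_self c_ne_zero]
    · simp only [← sum_div]
      exact div_le_div_of_nonneg_right (hGsp R R' i hR x) c_nonneg

lemma Strategyproof.decomposesAt_sum_dictWeight (hsp : Strategyproof F) (hF : IsSDS F)
    (hn : 1 ≤ n) (hm : 2 ≤ m) : DecomposesAt F (∑ i, dictWeight F i) := by
  have : NeZero m := NeZero.of_pos (by omega)
  obtain ⟨d, hd, mul_d⟩ := exists_isRandDict_mul_eq_dictMix (m := m) hn (hsp.dictWeight_nonneg hF)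
  obtain ⟨g, hg, hgsp, mul_g⟩ := (hsp.sub_dictMix_dictWeight hF).exists_isSDS_mul_eq
    (c := 1 - ∑ i, dictWeight F i) (fun R x => sub_nonneg.2 (hsp.dictMix_dictWeight_le hF hm R x))
    (fun R => by rw [sum_sub_distrib, hF.2, sum_univ_dictMix]) hF hsp
  refine ⟨d, g, hd, hg, hgsp, fun R x => ?_⟩
  rw [mul_d, mul_g, add_sub_cancel]

lemma Strategyproof.sum_dictWeight_le_one (hsp : Strategyproof F) (hF : IsSDS F) (hm : 2 ≤ m) :
    ∑ i, dictWeight F i ≤ 1 := by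
  have : NeZero m := NeZero.of_pos (by omega)
  rw [← hF.2 1, ← sum_univ_dictMix (m := m) (dictWeight F) 1]
  exact sum_le_sum fun x _ => hsp.dictMix_dictWeight_le hF hm 1 x

lemma DecomposesAt.le_sum_dictWeight {γ : ℝ} (hγ : DecomposesAt F γ) (hγ_le : γ ≤ 1)
    (hm : 2 ≤ m) : γ ≤ ∑ i, dictWeight F i := by
  obtain ⟨d, g, ⟨δ, -, δ_sum, d_eq⟩, hg, hgsp, F_eq⟩ := hγ
  have weight_le (i : Fin n) : γ * δ i ≤ dictWeight F i := by
    obtain ⟨x, y, W, hxy, hW⟩ := exists_topGain_eq_dictWeight hm F i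
    have topGain_d : topGain d i x y W = δ i :=
      (funext₂ d_eq : d = dictMix δ) ▸ topGain_dictMix δ i hxy W
    have topGain_F : topGain F i x y W = γ * topGain d i x y W + (1 - γ) * topGain g i x y W := by
      simp only [topGain, contourProb, F_eq]
      ring
    rw [← hW, topGain_F, topGain_d, le_add_iff_nonneg_right]
    exact mul_nonneg (sub_nonneg.2 hγ_le) (hgsp.topGain_nonneg hg i x y W)
  calc γ = ∑ i, γ * δ i := by rw [← mul_sum, δ_sum, mul_one]
    _ ≤ ∑ i, dictWeight F i := sum_le_sum fun i _ => weight_le i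

lemma Strategyproof.randDictDegree_sum_dictWeight (hsp : Strategyproof F) (hF : IsSDS F)
    (hn : 1 ≤ n) (hm : 2 ≤ m) : RandDictDegree F (∑ i, dictWeight F i) :=
  ⟨sum_nonneg fun i _ => hsp.dictWeight_nonneg hF i, hsp.sum_dictWeight_le_one hF hm,
    hsp.decomposesAt_sum_dictWeight hF hn hm,
    fun _ _ hγ_le hγ => hγ.le_sum_dictWeight hγ_le hm⟩

end Dictatorships

/-- For `m ≥ 3` and `ε ∈ [0,1]`, every strategyproof SDS that is
`(1-ε)/m`-ex post efficient is `γ`-randomly dictatorial for some `γ ≥ ε`. -/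
theorem expost_implies_randomly_dictatorial (n m : ℕ) (hn : 1 ≤ n) (hm : 3 ≤ m)
    (ε : ℝ) (hε0 : 0 ≤ ε) (hε1 : ε ≤ 1)
    (F : Profile n m → Fin m → ℝ) (hF : IsSDS F) (hsp : Strategyproof F)
    (heff : ExPostEff F ((1 - ε) / (m : ℝ))) :
    ∃ γ : ℝ, ε ≤ γ ∧ RandDictDegree F γ := by
  have ε_le_sum : ε ≤ ∑ i, dictWeight F i := hsp.le_sum_dictWeight_of_exPostEff hF hm heff
  have degree : RandDictDegree F (∑ i, dictWeight F i) :=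
    hsp.randDictDegree_sum_dictWeight hF hn (by omega)
  exact ⟨∑ i, dictWeight F i, ε_le_sum, degree⟩
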